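/- arXiv:2304.03370 — 6 statements merged into one kernel-verified Lean document; each statement's English description precedes it below -/
import Mathlib

section
/- Let X be a metric space and H any hypothesis class on X. With respect to metric-ball attacks and the constrained-adversary loss ℓ_CA: (a) there exists a robustly-reliable learner L such that for every target h* ∈ H, every labeled sample S labeled by h*, and every η ≥ 0, RR^L(S,η) ⊇ Agree(H_0(S)); and (b) for every robustly-reliable learner L, every labeled sample S, and every η ≥ 0, RR^L(S,η) ⊆ Agree(H_0(S)). -/
/-!
For a sample `S`, the learner in the existence part predicts `true` at `z` exactly when some
consistent hypothesis does, and has radius `⊤` on the agreement region of the version space and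
`-1` elsewhere. The target lies in the version space, so on the agreement region the prediction
equals the target's label and the loss vanishes for every attack. Conversely, if `rad S z ≥ 0`,
every hypothesis in the version space is a possible target and so must agree with `hyp S` at `z`:
by clause (ii) when the radius is `0`, and by clause (i) with the attack `x = z` otherwise.
-/

/-- `S` is labeled by `h` : every labeled pair in `S` carries the label `h` assigns. -/
def labeledBy {X : Type*} (S : List (X × Bool)) (h : X → Bool) : Prop :=
  ∀ p ∈ S, p.2 = h p.1

/-- Version space: hypotheses in `H` consistent with the sample `S`. -/
def versionSpace {X : Type*} (H : Set (X → Bool)) (S : List (X × Bool)) : Set (X → Bool) :=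
  {h ∈ H | ∀ p ∈ S, h p.1 = p.2}

/-- Agreement region of a set of hypotheses. -/
def agree {X : Type*} (G : Set (X → Bool)) : Set X :=
  {x | ∀ h₁ ∈ G, ∀ h₂ ∈ G, h₁ x = h₂ x}

/-- Constrained-adversary loss `ℓ_CA^{h*}(h,x,z)`. -/
def lossCA {X : Type*} (hs h : X → Bool) (x z : X) : ℕ :=
  if h z ≠ hs z ∧ hs z = hs x then 1 else 0

/-- A learner (`hyp`, `rad`) is robustly reliable w.r.t. metric-ball attacks and loss `ℓ`:
the reliability radius takes values in `{-1} ∪ [0,∞]`, and for every target `hs ∈ H` and every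
sample labeled by `hs`, (i) if `rad S z > 0` and `dist x z < rad S z` then `ℓ hs (hyp S) x z = 0`,
and (ii) if `rad S z = 0` then `hyp S z = hs z`. -/
def RobustlyReliableBall {X : Type*} [MetricSpace X] (H : Set (X → Bool))
    (ℓ : (X → Bool) → (X → Bool) → X → X → ℕ)
    (hyp : List (X × Bool) → X → Bool) (rad : List (X × Bool) → X → EReal) : Prop :=
  (∀ S z, rad S z = -1 ∨ 0 ≤ rad S z) ∧
  ∀ hs ∈ H, ∀ S : List (X × Bool), labeledBy S hs →
    (∀ x z : X, 0 < rad S z → ((dist x z : ℝ) : EReal) < rad S z → ℓ hs (hyp S) x z = 0) ∧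
    (∀ z : X, rad S z = 0 → hyp S z = hs z)

/-- The robustly-reliable region at level `η` is `{z | rad S z ≥ η}`. -/
def RRregion {X : Type*} (rad : List (X × Bool) → X → EReal)
    (S : List (X × Bool)) (η : ℝ) : Set X :=
  {z | (η : EReal) ≤ rad S z}

/-- Theorem 3.1 (for `ℓ_CA`): (a) there is a robustly-reliable learner whose robustly-reliable
region contains the agreement region of the version space, at every level `η ≥ 0`, for every
target `h* ∈ H` and every sample labeled by it; (b) for every robustly-reliable learner, every
sample and every `η ≥ 0`, the robustly-reliable region is contained in the agreement region
of the version space. -/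
theorem rr_region_eq_agreement_CA {X : Type*} [MetricSpace X] (H : Set (X → Bool)) :
    (∃ (hyp : List (X × Bool) → X → Bool) (rad : List (X × Bool) → X → EReal),
      RobustlyReliableBall H lossCA hyp rad ∧
      ∀ hs ∈ H, ∀ S : List (X × Bool), labeledBy S hs → ∀ η : ℝ, 0 ≤ η →
        agree (versionSpace H S) ⊆ RRregion rad S η) ∧
    (∀ (hyp : List (X × Bool) → X → Bool) (rad : List (X × Bool) → X → EReal),
      RobustlyReliableBall H lossCA hyp rad →
      ∀ (S : List (X × Bool)) (η : ℝ), 0 ≤ η →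
        RRregion rad S η ⊆ agree (versionSpace H S)) := by
  classical
  refine ⟨⟨fun S z => decide (∃ h ∈ versionSpace H S, h z = true),
    fun S z => if z ∈ agree (versionSpace H S) then ⊤ else -1, ⟨?_, ?_⟩, ?_⟩, ?_⟩
  · intro S z
    dsimp only
    split_ifs
    · exact Or.inr le_top
    · exact Or.inl rfl
  · intro hs hH S hS
    have hmem : hs ∈ versionSpace H S := ⟨hH, fun p hp => (hS p hp).symm⟩
    -- On the agreement region the existential vote is the common label, hence the target's.
    have key : ∀ z ∈ agree (versionSpace H S),
        decide (∃ h ∈ versionSpace H S, h z = true) = hs z := by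
      intro z hz
      rw [Bool.eq_iff_iff, decide_eq_true_iff]
      exact ⟨fun ⟨h, hh, hhz⟩ => (hz hs hmem h hh).trans hhz, fun h => ⟨hs, hmem, h⟩⟩
    constructor
    · intro x z hpos _
      dsimp only at hpos
      split_ifs at hpos with hz
      · simp [lossCA, key z hz]
      · exact absurd hpos (by
          rw [not_lt]
          exact EReal.neg_le_zero.mpr zero_le_one)
    · intro z h0
      dsimp only at h0
      split_ifs at h0 with hz
      · exact key z hz
      · exact absurd h0 (by simp)
  · intro hs _ S _ η _ z hz
    simp [RRregion, hz]
  · intro hyp rad hR S η hη z hz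
    have h0 : (0 : EReal) ≤ rad S z := le_trans (by exact_mod_cast hη) hz
    -- Every consistent hypothesis is a possible target, so it must match `hyp S` at `z`.
    have key : ∀ h ∈ versionSpace H S, hyp S z = h z := by
      intro h hh
      obtain ⟨h1, h2⟩ := hR.2 h hh.1 S (fun p hp => (hh.2 p hp).symm)
      rcases h0.eq_or_lt with h0 | h0
      · exact h2 z h0.symm
      · -- The trivial attack `x = z` already forces correctness.
        have := h1 z z h0 (by simpa using h0)
        simpa [lossCA] using this
    exact fun g₁ hg₁ g₂ hg₂ => (key g₁ hg₁).symm.trans (key g₂ hg₂)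
end

section
/- Let X be a metric space and H any hypothesis class on X. With respect to metric-ball attacks and the true-label loss ℓ_TL: (a) there exists a robustly-reliable learner L such that for every target h* ∈ H, every labeled sample S labeled by h*, and every η ≥ 0, RR^L(S,η) ⊇ Agree(H_0(S)); and (b) for every robustly-reliable learner L, every labeled sample S, and every η ≥ 0, RR^L(S,η) ⊆ Agree(H_0(S)). -/
/-- True-label loss `ℓ_TL^{h*}(h,x,z)`. -/
def lossTL {X : Type*} (hs h : X → Bool) (x z : X) : ℕ :=
  if h z ≠ hs z then 1 else 0

/-- Theorem 3.1 (for `ℓ_TL`): (a) there is a robustly-reliable learner whose robustly-reliable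
region contains the agreement region of the version space, at every level `η ≥ 0`, for every
target `h* ∈ H` and every sample labeled by it; (b) for every robustly-reliable learner, every
sample and every `η ≥ 0`, the robustly-reliable region is contained in the agreement region
of the version space. -/
theorem rr_region_eq_agreement_TL {X : Type*} [MetricSpace X] (H : Set (X → Bool)) :
    (∃ (hyp : List (X × Bool) → X → Bool) (rad : List (X × Bool) → X → EReal),
      RobustlyReliableBall H lossTL hyp rad ∧
      ∀ hs ∈ H, ∀ S : List (X × Bool), labeledBy S hs → ∀ η : ℝ, 0 ≤ η →
        agree (versionSpace H S) ⊆ RRregion rad S η) ∧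
    (∀ (hyp : List (X × Bool) → X → Bool) (rad : List (X × Bool) → X → EReal),
      RobustlyReliableBall H lossTL hyp rad →
      ∀ (S : List (X × Bool)) (η : ℝ), 0 ≤ η →
        RRregion rad S η ⊆ agree (versionSpace H S)) := by
  classical
  constructor
  · -- Radius `⊤` on the agreement region, `-1` off it; predict with any consistent hypothesis.
    refine ⟨fun S => if h : (versionSpace H S).Nonempty then h.some else fun _ => false,
      fun S z => if z ∈ agree (versionSpace H S) then ⊤ else -1, ⟨?_, ?_⟩, ?_⟩
    · intro S z
      dsimp only
      split_ifs <;> simp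
    · intro hs hH S hS
      have hmem : hs ∈ versionSpace H S := ⟨hH, fun p hp => (hS p hp).symm⟩
      have hne : (versionSpace H S).Nonempty := ⟨hs, hmem⟩
      simp only [dif_pos hne]
      have hneg : ¬ (0 : EReal) < -1 := not_lt.mpr (by simp)
      refine ⟨fun x z hz _ => ?_, fun z hz => ?_⟩
      · by_cases hza : z ∈ agree (versionSpace H S)
        · simp [lossTL, hza _ hne.some_mem _ hmem]
        · rw [if_neg hza] at hz
          exact absurd hz hneg
      · by_cases hza : z ∈ agree (versionSpace H S)
        · exact hza _ hne.some_mem _ hmem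
        · rw [if_neg hza] at hz
          simp at hz
    · intro hs _ S _ η _ z hz
      simp [RRregion, hz]
  · intro hyp rad hL S η hη z hz
    have h0 : (0 : EReal) ≤ rad S z := le_trans (by exact_mod_cast hη) hz
    -- Every consistent hypothesis is a possible target, so the prediction at `z` must match it.
    have key : ∀ h ∈ versionSpace H S, hyp S z = h z := by
      intro h hh
      obtain ⟨hpos, hzero⟩ := hL.2 h hh.1 S (fun p hp => (hh.2 p hp).symm)
      rcases h0.eq_or_lt with he | hlt
      · exact hzero z he.symm
      · -- `z` lies in its own ball, so the trivial attack `x = z` is covered.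
        have hl := hpos z z hlt (by simpa using hlt)
        by_contra hc
        simp [lossTL, hc] at hl
    intro h₁ hh₁ h₂ hh₂
    rw [← key h₁ hh₁, key h₂ hh₂]
end

section
/- Let X be a metric space and H any hypothesis class on X. For a labeled sample S and η > 0 define A(S,η) = {z ∈ X : B°(z,η) ⊆ Agree(H_0(S)) and h(x) = h(z) for every x ∈ B°(z,η) and every h ∈ H_0(S)}. With respect to metric-ball attacks and the stability loss ℓ_ST: (a) there exists a robustly-reliable learner L such that for every target h* ∈ H, every labeled sample S labeled by h*, and every η > 0, RR^L(S,η) ⊇ A(S,η); and (b) for every robustly-reliable learner L, every labeled sample S, and every η > 0, RR^L(S,η) ⊆ A(S,η). -/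
/-- Stability loss `ℓ_ST^{h*}(h,x,z)`. -/
def lossST {X : Type*} (hs h : X → Bool) (x z : X) : ℕ :=
  if h z ≠ hs x then 1 else 0

/-- The set `A(S,η)`: points `z` whose open `η`-ball lies in the agreement region of the
version space and on which every version-space hypothesis is constant. -/
def ASet {X : Type*} [MetricSpace X] (H : Set (X → Bool)) (S : List (X × Bool)) (η : ℝ) :
    Set X :=
  {z | Metric.ball z η ⊆ agree (versionSpace H S) ∧
    ∀ x ∈ Metric.ball z η, ∀ h ∈ versionSpace H S, h x = h z}

/-- A version-space member when one exists, otherwise the constant `false`. -/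
noncomputable def ermHyp {X : Type*} (H : Set (X → Bool)) (S : List (X × Bool)) : X → Bool :=
  open Classical in
  if hne : (versionSpace H S).Nonempty then hne.some else fun _ => false

/-- The levels `η > 0` with `z ∈ A(S,η)`, together with the abstention value `-1`. -/
def levels {X : Type*} [MetricSpace X] (H : Set (X → Bool)) (S : List (X × Bool)) (z : X) :
    Set EReal :=
  {e | e = -1 ∨ ∃ η : ℝ, 0 < η ∧ z ∈ ASet H S η ∧ e = (η : EReal)}

lemma mem_versionSpace_of_labeledBy {X : Type*} {H : Set (X → Bool)} {S : List (X × Bool)}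
    {h : X → Bool} (hH : h ∈ H) (hS : labeledBy S h) : h ∈ versionSpace H S :=
  ⟨hH, fun p hp => (hS p hp).symm⟩

lemma ermHyp_eq {X : Type*} [MetricSpace X] {H : Set (X → Bool)} {S : List (X × Bool)}
    {h : X → Bool} (hh : h ∈ versionSpace H S) {x z : X} {η : ℝ} (hz : z ∈ ASet H S η)
    (hx : dist x z < η) : ermHyp H S z = h x := by
  have hne : (versionSpace H S).Nonempty := ⟨h, hh⟩
  have hmem : ermHyp H S ∈ versionSpace H S := by
    rw [ermHyp, dif_pos hne]
    exact hne.some_mem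
  have hx' : x ∈ Metric.ball z η := hx
  rw [← hz.2 x hx' _ hmem]
  exact hz.1 hx' _ hmem _ hh

/-- Since `a ≥ -1`, the element of `levels H S z` exceeding `a` is not the abstention value. -/
lemma exists_level {X : Type*} [MetricSpace X] {H : Set (X → Bool)} {S : List (X × Bool)}
    {z : X} {a : EReal} (ha : -1 ≤ a) (h : a < sSup (levels H S z)) :
    ∃ η : ℝ, 0 < η ∧ z ∈ ASet H S η ∧ a < (η : EReal) := by
  obtain ⟨e, he, hae⟩ := lt_sSup_iff.1 h
  rcases he with rfl | ⟨η, h0, hz, rfl⟩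
  · exact absurd hae (not_lt.2 ha)
  · exact ⟨η, h0, hz, hae⟩

/-- Theorem 3.2 (for `ℓ_ST`): (a) there is a robustly-reliable learner whose robustly-reliable
region at each level `η > 0` contains `A(S,η)`, for every target `h* ∈ H` and every sample
labeled by it; (b) for every robustly-reliable learner, every sample and every `η > 0`, the
robustly-reliable region at level `η` is contained in `A(S,η)`. -/
theorem rr_region_eq_ASet_ST {X : Type*} [MetricSpace X] (H : Set (X → Bool)) :
    (∃ (hyp : List (X × Bool) → X → Bool) (rad : List (X × Bool) → X → EReal),
      RobustlyReliableBall H lossST hyp rad ∧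
      ∀ hs ∈ H, ∀ S : List (X × Bool), labeledBy S hs → ∀ η : ℝ, 0 < η →
        ASet H S η ⊆ RRregion rad S η) ∧
    (∀ (hyp : List (X × Bool) → X → Bool) (rad : List (X × Bool) → X → EReal),
      RobustlyReliableBall H lossST hyp rad →
      ∀ (S : List (X × Bool)) (η : ℝ), 0 < η →
        RRregion rad S η ⊆ ASet H S η) := by
  have neg_one_lt : (-1 : EReal) < 0 := by simp
  refine ⟨⟨ermHyp H, fun S z => sSup (levels H S z), ⟨?_, ?_⟩, ?_⟩, ?_⟩
  · intro S z
    have hge : (-1 : EReal) ≤ sSup (levels H S z) := le_sSup (Or.inl rfl)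
    rcases hge.eq_or_lt with h | h
    · exact Or.inl h.symm
    · obtain ⟨η, h0, hz, -⟩ := exists_level le_rfl h
      exact Or.inr ((EReal.coe_nonneg.2 h0.le).trans (le_sSup (Or.inr ⟨η, h0, hz, rfl⟩)))
  · intro hs hH S hS
    have hmem := mem_versionSpace_of_labeledBy hH hS
    refine ⟨fun x z _ hd => ?_, fun z hz => ?_⟩
    · have hd0 : (-1 : EReal) ≤ ((dist x z : ℝ) : EReal) :=
        neg_one_lt.le.trans (EReal.coe_nonneg.2 dist_nonneg)
      obtain ⟨η, -, hA, hlt⟩ := exists_level hd0 hd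
      simp [lossST, ermHyp_eq hmem hA (EReal.coe_lt_coe_iff.1 hlt)]
    · obtain ⟨η, h0, hA, -⟩ := exists_level (a := -1) le_rfl (neg_one_lt.trans_eq hz.symm)
      exact ermHyp_eq hmem hA (by simpa using h0)
  · intro hs _ S _ η h0 z hz
    exact le_sSup (s := levels H S z) (Or.inr ⟨η, h0, hz, rfl⟩)
  · rintro hyp rad ⟨-, hR⟩ S η h0 z (hz : (η : EReal) ≤ rad S z)
    have key : ∀ x ∈ Metric.ball z η, ∀ h ∈ versionSpace H S, hyp S z = h x := by
      intro x hx h hh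
      have hl := (hR h hh.1 S fun p hp => (hh.2 p hp).symm).1 x z
        ((EReal.coe_pos.2 h0).trans_le hz)
        ((EReal.coe_lt_coe_iff.2 (Metric.mem_ball.1 hx)).trans_le hz)
      by_contra hne
      simp [lossST, hne] at hl
    exact ⟨fun x hx h₁ hh₁ h₂ hh₂ => (key x hx h₁ hh₁).symm.trans (key x hx h₂ hh₂),
      fun x hx h hh => (key x hx h hh).symm.trans (key z (Metric.mem_ball_self h0) h hh)⟩
end

section
/- Let X be a set, H any hypothesis class on X, and U a perturbation function on X. With respect to U and the constrained-adversary loss ℓ_CA: (a) there exists a robustly-reliable learner L such that for every target h* ∈ H and every labeled sample S labeled by h*, RR^L(S) ⊇ Agree(H_0(S)); and (b) for every robustly-reliable learner L and every labeled sample S, RR^L(S) ⊆ Agree(H_0(S)). -/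
/-- A learner (`hyp`, `abst`) is robustly reliable w.r.t. a perturbation function `U`
and loss `ℓ`: for every target `hs ∈ H` and every sample labeled by `hs`, whenever the
learner does not abstain at `z` and `z ∈ U x`, the loss `ℓ hs (hyp S) x z` vanishes. -/
def RobustlyReliableU {X : Type*} (H : Set (X → Bool)) (U : X → Set X)
    (ℓ : (X → Bool) → (X → Bool) → X → X → ℕ)
    (hyp : List (X × Bool) → X → Bool) (abst : List (X × Bool) → X → Bool) : Prop :=
  ∀ hs ∈ H, ∀ S : List (X × Bool), labeledBy S hs →
    ∀ x z : X, abst S z = true → z ∈ U x → ℓ hs (hyp S) x z = 0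

/-- The robustly-reliable region: points where the learner does not abstain. -/
def RRregionU {X : Type*} (abst : List (X × Bool) → X → Bool) (S : List (X × Bool)) : Set X :=
  {z | abst S z = true}

/-- Theorem 3.6(a) (for `ℓ_CA`): for any perturbation function `U` (with `x ∈ U x`),
(a) there is a robustly-reliable learner w.r.t. `U` and `ℓ_CA` whose robustly-reliable region
contains the agreement region of the version space, for every target `h* ∈ H` and every sample
labeled by it; (b) for every robustly-reliable learner and every sample, the robustly-reliable
region is contained in the agreement region of the version space. -/
theorem rr_region_eq_agreement_U_CA {X : Type*} (H : Set (X → Bool)) (U : X → Set X)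
    (hU : ∀ x, x ∈ U x) :
    (∃ (hyp : List (X × Bool) → X → Bool) (abst : List (X × Bool) → X → Bool),
      RobustlyReliableU H U lossCA hyp abst ∧
      ∀ hs ∈ H, ∀ S : List (X × Bool), labeledBy S hs →
        agree (versionSpace H S) ⊆ RRregionU abst S) ∧
    (∀ (hyp : List (X × Bool) → X → Bool) (abst : List (X × Bool) → X → Bool),
      RobustlyReliableU H U lossCA hyp abst →
      ∀ S : List (X × Bool), RRregionU abst S ⊆ agree (versionSpace H S)) := by
  classical
  constructor
  -- The learner predicts 1 where some consistent hypothesis does; on the agreement region this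
  -- is the common label of the version space.
  · refine ⟨fun S z => decide (∃ h ∈ versionSpace H S, h z = true),
      fun S z => decide (z ∈ agree (versionSpace H S)), ?_, ?_⟩
    · intro hs hsH S hS x z hz _
      have hag : z ∈ agree (versionSpace H S) := of_decide_eq_true hz
      have hmem : hs ∈ versionSpace H S := ⟨hsH, fun p hp => (hS p hp).symm⟩
      have hpred : decide (∃ h ∈ versionSpace H S, h z = true) = hs z := by
        rw [Bool.eq_iff_iff, decide_eq_true_iff]
        exact ⟨fun ⟨h, hh, hz1⟩ => hag hs hmem h hh ▸ hz1, fun h1 => ⟨hs, hmem, h1⟩⟩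
      exact if_neg fun hne => hne.1 hpred
    · intro _ _ S _ z hz
      exact decide_eq_true hz
  · intro hyp abst hRR S z hz
    -- Any consistent hypothesis could be the target, and `z` is a perturbation of itself with
    -- the same label, so the loss at `(z, z)` forces the prediction to match the target.
    have key : ∀ h ∈ versionSpace H S, hyp S z = h z := by
      intro h hh
      by_contra hne
      have h0 := hRR h hh.1 S (fun p hp => (hh.2 p hp).symm) z z hz (hU z)
      simp [lossCA, hne] at h0
    intro h₁ hh₁ h₂ hh₂
    exact (key h₁ hh₁).symm.trans (key h₂ hh₂)
end

section
/- Let X be a set, H any hypothesis class on X, and U a perturbation function on X. With respect to U and the true-label loss ℓ_TL: (a) there exists a robustly-reliable learner L such that for every target h* ∈ H and every labeled sample S labeled by h*, RR^L(S) ⊇ Agree(H_0(S)); and (b) for every robustly-reliable learner L and every labeled sample S, RR^L(S) ⊆ Agree(H_0(S)). -/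
/-- Theorem 3.6(a) (for `ℓ_TL`): for any perturbation function `U` (with `x ∈ U x`),
(a) there is a robustly-reliable learner w.r.t. `U` and `ℓ_TL` whose robustly-reliable region
contains the agreement region of the version space, for every target `h* ∈ H` and every sample
labeled by it; (b) for every robustly-reliable learner and every sample, the robustly-reliable
region is contained in the agreement region of the version space. -/
theorem rr_region_eq_agreement_U_TL {X : Type*} (H : Set (X → Bool)) (U : X → Set X)
    (hU : ∀ x, x ∈ U x) :
    (∃ (hyp : List (X × Bool) → X → Bool) (abst : List (X × Bool) → X → Bool),
      RobustlyReliableU H U lossTL hyp abst ∧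
      ∀ hs ∈ H, ∀ S : List (X × Bool), labeledBy S hs →
        agree (versionSpace H S) ⊆ RRregionU abst S) ∧
    (∀ (hyp : List (X × Bool) → X → Bool) (abst : List (X × Bool) → X → Bool),
      RobustlyReliableU H U lossTL hyp abst →
      ∀ S : List (X × Bool), RRregionU abst S ⊆ agree (versionSpace H S)) := by
  classical
  refine ⟨⟨fun S z => decide (∃ h ∈ versionSpace H S, h z = true),
    fun S z => decide (z ∈ agree (versionSpace H S)), ?_, ?_⟩, ?_⟩
  · intro hs hsH S hS x z hz _
    have hz' : z ∈ agree (versionSpace H S) := of_decide_eq_true hz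
    have hsV : hs ∈ versionSpace H S := ⟨hsH, fun p hp => (hS p hp).symm⟩
    have key : (∃ h ∈ versionSpace H S, h z = true) ↔ hs z = true :=
      ⟨fun ⟨h, hV, ht⟩ => (hz' hs hsV h hV).trans ht, fun ht => ⟨hs, hsV, ht⟩⟩
    simp [lossTL, key]
  · intro hs _ S _ z hz
    exact decide_eq_true hz
  · intro hyp abst hR S z hz h₁ h₁V h₂ h₂V
    -- Every consistent hypothesis is a possible target, and `z` is a perturbation of itself.
    have correct : ∀ h ∈ versionSpace H S, hyp S z = h z := fun h hV => by
      simpa [lossTL] using hR h hV.1 S (fun p hp => (hV.2 p hp).symm) z z hz (hU z)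
    exact (correct h₁ h₁V).symm.trans (correct h₂ h₂V)
end

section
/- Let X be a set, H any hypothesis class on X, and U a perturbation function on X. For a labeled sample S define A(S) = {z ∈ X : U⁻¹(z) ⊆ Agree(H_0(S)) and h(x) = h(z) for every x ∈ U⁻¹(z) and every h ∈ H_0(S)}. With respect to U and the stability loss ℓ_ST: (a) there exists a robustly-reliable learner L such that for every target h* ∈ H and every labeled sample S labeled by h*, RR^L(S) ⊇ A(S); and (b) for every robustly-reliable learner L and every labeled sample S, RR^L(S) ⊆ A(S). -/
/-- `U⁻¹(z) = {x : z ∈ U x}`. -/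
def Uinv {X : Type*} (U : X → Set X) (z : X) : Set X := {x | z ∈ U x}

/-- The set `A(S)`: points `z` with `U⁻¹(z)` inside the agreement region of the version space,
on which every version-space hypothesis is constant. -/
def ASetU {X : Type*} (H : Set (X → Bool)) (U : X → Set X) (S : List (X × Bool)) : Set X :=
  {z | Uinv U z ⊆ agree (versionSpace H S) ∧
    ∀ x ∈ Uinv U z, ∀ h ∈ versionSpace H S, h x = h z}

/-- Theorem 3.6(c) (for `ℓ_ST`): for any perturbation function `U` (with `x ∈ U x`),
(a) there is a robustly-reliable learner w.r.t. `U` and `ℓ_ST` whose robustly-reliable region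
contains `A(S)`, for every target `h* ∈ H` and every sample labeled by it; (b) for every
robustly-reliable learner and every sample, the robustly-reliable region is contained in `A(S)`. -/
theorem rr_region_eq_ASet_U_ST {X : Type*} (H : Set (X → Bool)) (U : X → Set X)
    (hU : ∀ x, x ∈ U x) :
    (∃ (hyp : List (X × Bool) → X → Bool) (abst : List (X × Bool) → X → Bool),
      RobustlyReliableU H U lossST hyp abst ∧
      ∀ hs ∈ H, ∀ S : List (X × Bool), labeledBy S hs →
        ASetU H U S ⊆ RRregionU abst S) ∧
    (∀ (hyp : List (X × Bool) → X → Bool) (abst : List (X × Bool) → X → Bool),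
      RobustlyReliableU H U lossST hyp abst →
      ∀ S : List (X × Bool), RRregionU abst S ⊆ ASetU H U S) := by
  classical
  refine ⟨⟨fun S z => decide (∃ h ∈ versionSpace H S, h z = true),
    fun S z => decide (z ∈ ASetU H U S), ?_, ?_⟩, ?_⟩
  · intro hs hH S hS x z hz hzx
    have hA : z ∈ ASetU H U S := of_decide_eq_true hz
    have hV : hs ∈ versionSpace H S := ⟨hH, fun p hp => (hS p hp).symm⟩
    have hxz : hs x = hs z := hA.2 x hzx hs hV
    -- `z ∈ U z` puts `z` itself in the agreement region, so the learner predicts `hs z`.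
    have hag : ∀ h ∈ versionSpace H S, h z = hs z := fun h hh => hA.1 (hU z) h hh hs hV
    have key : decide (∃ h ∈ versionSpace H S, h z = true) = hs z := by
      rw [Bool.eq_iff_iff, decide_eq_true_iff]
      exact ⟨fun ⟨h, hh, e⟩ => hag h hh ▸ e, fun e => ⟨hs, hV, e⟩⟩
    simp only [lossST, key, hxz, ne_eq, not_true_eq_false, if_false]
  · intro _ _ S _ z hz
    exact decide_eq_true hz
  · intro hyp abst hR S z hz
    -- Every consistent hypothesis is a possible target, so it takes the predicted value on `U⁻¹(z)`.
    have key : ∀ h ∈ versionSpace H S, ∀ x ∈ Uinv U z, hyp S z = h x := by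
      intro h hh x hx
      have := hR h hh.1 S (fun p hp => (hh.2 p hp).symm) x z hz hx
      by_contra hne
      simp [lossST, hne] at this
    exact ⟨fun x hx h₁ hh₁ h₂ hh₂ => (key h₁ hh₁ x hx).symm.trans (key h₂ hh₂ x hx),
      fun x hx h hh => (key h hh x hx).symm.trans (key h hh z (hU z))⟩
end
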